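/- Let G be a graph and C a circuit in G. If the contracted graph G/C admits a nowhere-zero Z2×Z2-flow, then G admits a Z2×Z2-flow f such that E(G) − E(C) ⊆ supp(f) and |E_{f=(0,0)}(C)| < (1/4)|E(C)|. -/

import Mathlib

/-- A finite multigraph: loops and multiple edges are allowed.  Each edge is
assigned its (unordered) pair of endpoints. -/
structure Multigraph where
  V : Type
  E : Type
  finV : Finite V
  finE : Finite E
  ends : E → Sym2 V

attribute [instance] Multigraph.finV Multigraph.finE

namespace Multigraph

/-- A walk of length `n`: a sequence of `n+1` vertices and `n` edges, each edge
joining consecutive vertices. -/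
structure Walk (G : Multigraph) (n : ℕ) where
  vtx : Fin (n + 1) → G.V
  edge : Fin n → G.E
  compat : ∀ i : Fin n, G.ends (edge i) = s(vtx i.castSucc, vtx i.succ)

variable (G : Multigraph)

/-- The degree of a vertex (a loop counts twice). -/
noncomputable def degree (v : G.V) : ℕ :=
  Nat.card {e : G.E // v ∈ G.ends e ∧ ¬ (G.ends e).IsDiag} +
    2 * Nat.card {e : G.E // G.ends e = s(v, v)}

/-- The degree of a vertex in the subgraph with edge set `S` (a loop counts twice). -/
noncomputable def degIn (S : Set G.E) (v : G.V) : ℕ :=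
  Nat.card {e : G.E // e ∈ S ∧ v ∈ G.ends e ∧ ¬ (G.ends e).IsDiag} +
    2 * Nat.card {e : G.E // e ∈ S ∧ G.ends e = s(v, v)}

/-- A cycle (identified with its edge set): every vertex has even degree. -/
def IsCycle (S : Set G.E) : Prop := ∀ v : G.V, Even (G.degIn S v)

/-- `u` is joined to `w` by a path using only edges in `S`. -/
def Reaches (S : Set G.E) (u w : G.V) : Prop :=
  Relation.ReflTransGen (fun a b => ∃ e ∈ S, G.ends e = s(a, b)) u w

/-- A circuit (identified with its edge set): a connected `2`-regular subgraph. -/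
def IsCircuit (S : Set G.E) : Prop :=
  S.Nonempty ∧
    (∀ v : G.V, (∃ e ∈ S, v ∈ G.ends e) → G.degIn S v = 2) ∧
    ∀ u w : G.V, (∃ e ∈ S, u ∈ G.ends e) → (∃ e ∈ S, w ∈ G.ends e) → G.Reaches S u w

/-- A `ℤ₂×ℤ₂`-flow: at every vertex the values on the incident edges sum to zero
(a loop contributes its value twice, hence zero). -/
def IsFlow (f : G.E → ZMod 2 × ZMod 2) : Prop :=
  ∀ v : G.V, ∑ᶠ e ∈ {e : G.E | v ∈ G.ends e ∧ ¬ (G.ends e).IsDiag}, f e = 0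

/-- The support of a flow. -/
def supp (f : G.E → ZMod 2 × ZMod 2) : Set G.E := {e | f e ≠ 0}

/-- Contraction of the edge set `C`: delete the edges of `C` and identify the
ends of each edge of `C`. -/
def contract (C : Set G.E) : Multigraph where
  V := Quot fun u w : G.V => ∃ e ∈ C, G.ends e = s(u, w)
  E := {e : G.E // e ∉ C}
  finV := Finite.of_surjective _ (Quot.mk_surjective)
  finE := inferInstance
  ends := fun e => (G.ends e.1).map (Quot.mk _)

/-- A path: all vertices distinct (hence all edges distinct, which we also require). -/
def Walk.IsPath {n : ℕ} (W : G.Walk n) : Prop :=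
  Function.Injective W.vtx ∧ Function.Injective W.edge

/-- A nontrivial path all of whose internal vertices have degree `2` in `G`. -/
def IsDeg2Path {n : ℕ} (W : G.Walk n) : Prop :=
  1 ≤ n ∧ W.IsPath G ∧ ∀ i : Fin (n + 1), 0 < i.val → i.val < n → G.degree (W.vtx i) = 2

/-- A thread of `G`: a maximal path all of whose internal vertices have degree `2`
in `G` (maximal: its edge set is not properly contained in the edge set of
another such path). -/
def IsThread {n : ℕ} (W : G.Walk n) : Prop :=
  G.IsDeg2Path W ∧ ∀ (m : ℕ) (Q : G.Walk m), G.IsDeg2Path Q →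
    Set.range W.edge ⊆ Set.range Q.edge → Set.range Q.edge = Set.range W.edge

/-- A cycle cover: a (multi)collection of cycles covering every edge. -/
def IsCycleCover (𝒞 : Multiset (Set G.E)) : Prop :=
  (∀ S ∈ 𝒞, G.IsCycle S) ∧ ∀ e : G.E, ∃ S ∈ 𝒞, e ∈ S

/-- The length of a cycle cover: the sum of the lengths of its cycles. -/
noncomputable def coverLength (𝒞 : Multiset (Set G.E)) : ℕ :=
  (𝒞.map Set.ncard).sum

/-- The minimum length of a cycle cover of `G`. -/
noncomputable def cc : ℕ :=
  sInf {L : ℕ | ∃ 𝒞 : Multiset (Set G.E), G.IsCycleCover 𝒞 ∧ G.coverLength 𝒞 = L}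

/-- `G` is bridgeless: the ends of each edge `e` are still joined after deleting `e`. -/
def Bridgeless : Prop :=
  ∀ (e : G.E) (u w : G.V), G.ends e = s(u, w) → G.Reaches {e}ᶜ u w

/-- The connected component of the subgraph with edge set `S` containing the edge `e₀`. -/
def component (S : Set G.E) (e₀ : G.E) : Set G.E :=
  {e ∈ S | ∃ u w : G.V, u ∈ G.ends e₀ ∧ w ∈ G.ends e ∧ G.Reaches S u w}

/-- `B` is a connected component of the subgraph with edge set `S`. -/
def IsComponent (S B : Set G.E) : Prop := ∃ e₀ ∈ S, B = G.component S e₀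

/-- A `k`-flow: an orientation `D` (given by the tail/head pair of each edge)
together with an integer-valued function `f` with `|f e| < k`, conserved at
every vertex. -/
def IsIntFlow (k : ℕ) (D : G.E → G.V × G.V) (f : G.E → ℤ) : Prop :=
  (∀ e : G.E, s((D e).1, (D e).2) = G.ends e) ∧
    (∀ e : G.E, |f e| < (k : ℤ)) ∧
    ∀ v : G.V, (∑ᶠ e ∈ {e : G.E | (D e).1 = v}, f e) =
      ∑ᶠ e ∈ {e : G.E | (D e).2 = v}, f e

end Multigraph

namespace Multigraph

variable (G : Multigraph)

noncomputable instance fintypeE : Fintype G.E := Fintype.ofFinite _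

noncomputable instance fintypeV : Fintype G.V := Fintype.ofFinite _

open scoped Classical in
/-- The incidence matrix over `ℤ₂`; loops are incident with nothing. -/
noncomputable def inc (e : G.E) (v : G.V) : ZMod 2 :=
  if v ∈ G.ends e ∧ ¬ (G.ends e).IsDiag then 1 else 0

/-- The boundary map from edge chains to vertex chains over `ℤ₂`. -/
noncomputable def bd : (G.E → ZMod 2) →ₗ[ZMod 2] (G.V → ZMod 2) where
  toFun p v := ∑ e, p e * G.inc e v
  map_add' p q := by
    funext v
    simp [add_mul, Finset.sum_add_distrib]
  map_smul' c p := by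
    funext v
    simp [Finset.mul_sum, mul_assoc]

/-- The vertex chain of a single vertex. -/
noncomputable def pt (v : G.V) : G.V → ZMod 2 := by
  classical exact Pi.single v 1

variable {G}

theorem bd_apply (p : G.E → ZMod 2) (v : G.V) : G.bd p v = ∑ e, p e * G.inc e v := rfl

open scoped Classical in
theorem pt_apply (v w : G.V) : G.pt v w = if w = v then 1 else 0 := by
  simp [pt, Pi.single_apply]

theorem chain_add_self {α : Type*} (p : α → ZMod 2) : p + p = 0 := by
  funext a
  exact CharTwo.add_self_eq_zero _

theorem zmod_two_cases (a : ZMod 2) : a = 0 ∨ a = 1 := by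
  revert a; decide

theorem inc_eq {e : G.E} {a b : G.V} (h : G.ends e = s(a, b)) (v : G.V) :
    G.inc e v = G.pt a v + G.pt b v := by
  simp only [inc, h, pt_apply, Sym2.mem_iff, Sym2.mk_isDiag_iff]
  by_cases h1 : v = a <;> by_cases h2 : v = b <;> by_cases h3 : a = b <;>
    simp_all [CharTwo.add_self_eq_zero]

theorem isFlow_iff (f : G.E → ZMod 2 × ZMod 2) :
    G.IsFlow f ↔ G.bd (fun e => (f e).1) = 0 ∧ G.bd (fun e => (f e).2) = 0 := by
  classical
  have key : ∀ v, ∑ᶠ e ∈ {e : G.E | v ∈ G.ends e ∧ ¬ (G.ends e).IsDiag}, f e =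
      (G.bd (fun e => (f e).1) v, G.bd (fun e => (f e).2) v) := by
    intro v
    rw [finsum_mem_def, finsum_eq_sum_of_fintype, bd_apply, bd_apply]
    ext
    · rw [Prod.fst_sum]
      refine Finset.sum_congr rfl fun e _ => ?_
      by_cases h : v ∈ G.ends e ∧ ¬ (G.ends e).IsDiag <;> simp [Set.indicator, inc, h]
    · rw [Prod.snd_sum]
      refine Finset.sum_congr rfl fun e _ => ?_
      by_cases h : v ∈ G.ends e ∧ ¬ (G.ends e).IsDiag <;> simp [Set.indicator, inc, h]
  constructor
  · intro h
    constructor <;> funext v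
    · exact congrArg Prod.fst ((key v).symm.trans (h v))
    · exact congrArg Prod.snd ((key v).symm.trans (h v))
  · rintro ⟨h1, h2⟩ v
    rw [key v, h1, h2]
    rfl

open scoped Classical in
theorem bd_single {e : G.E} {a b : G.V} (h : G.ends e = s(a, b)) :
    G.bd (Pi.single e 1) = G.pt a + G.pt b := by
  funext v
  rw [bd_apply, Finset.sum_eq_single e]
  · simp [inc_eq h]
  · intro e' _ he'
    simp [he']
  · simp

theorem exists_join {S : Set G.E} {u w : G.V} (h : G.Reaches S u w) :
    ∃ K : G.E → ZMod 2, (∀ e ∉ S, K e = 0) ∧ G.bd K = G.pt u + G.pt w := by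
  classical
  induction h with
  | refl => exact ⟨0, fun _ _ => rfl, by rw [map_zero, chain_add_self]⟩
  | @tail b c _ hbc ih =>
    obtain ⟨K, hK, hb⟩ := ih
    obtain ⟨e, he, hends⟩ := hbc
    refine ⟨K + Pi.single e 1, fun e' he' => ?_, ?_⟩
    · have : e' ≠ e := fun h => he' (h ▸ he)
      simp [hK e' he', this]
    · rw [map_add, hb, bd_single hends]
      calc G.pt u + G.pt b + (G.pt b + G.pt c)
          = G.pt u + (G.pt b + G.pt b) + G.pt c := by abel
        _ = G.pt u + G.pt c := by rw [chain_add_self, add_zero]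

theorem sum_bd_eq_zero (p : G.E → ZMod 2) (R : Finset G.V)
    (hR : ∀ e a b, p e ≠ 0 → G.ends e = s(a, b) → (a ∈ R ↔ b ∈ R)) :
    ∑ v ∈ R, G.bd p v = 0 := by
  classical
  simp_rw [bd_apply]
  rw [Finset.sum_comm]
  refine Finset.sum_eq_zero fun e _ => ?_
  rw [← Finset.mul_sum]
  by_cases hp : p e = 0
  · simp [hp]
  obtain ⟨a, b, hab⟩ : ∃ a b, G.ends e = s(a, b) := by
    induction h : G.ends e with | _ a b => exact ⟨a, b, rfl⟩
  have := hR e a b hp hab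
  simp_rw [inc_eq hab, Finset.sum_add_distrib, pt_apply, Finset.sum_ite_eq']
  by_cases ha : a ∈ R
  · simp [ha, this.1 ha, CharTwo.add_self_eq_zero]
  · have hb : b ∉ R := fun h => ha (this.2 h)
    simp [ha, hb]

theorem reaches_symm {S : Set G.E} {u w : G.V} (h : G.Reaches S u w) : G.Reaches S w u := by
  induction h with
  | refl => exact .refl
  | tail _ hbc ih =>
    obtain ⟨e, he, hends⟩ := hbc
    exact .head ⟨e, he, hends.trans Sym2.eq_swap⟩ ih

theorem reaches_of_quot_eq {S : Set G.E} {u w : G.V}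
    (h : Quot.mk (fun u w : G.V => ∃ e ∈ S, G.ends e = s(u, w)) u = Quot.mk _ w) :
    G.Reaches S u w := by
  have h' := Quot.eqvGen_exact h
  clear h
  induction h' with
  | rel _ _ h => exact .single h
  | refl => exact .refl
  | symm _ _ _ ih => exact reaches_symm ih
  | trans _ _ _ _ _ ih1 ih2 => exact ih1.trans ih2

/-- Chains with zero boundary lift along a contraction. -/
theorem exists_lift_contract (C : Set G.E) (p' : (G.contract C).E → ZMod 2)
    (hp' : (G.contract C).bd p' = 0) :
    ∃ p : G.E → ZMod 2, G.bd p = 0 ∧ ∀ (e : G.E) (he : e ∉ C), p e = p' ⟨e, he⟩ := by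
  classical
  let mk : G.V → (G.contract C).V := Quot.mk _
  let g : G.E → ZMod 2 := fun e => if he : e ∉ C then p' ⟨e, he⟩ else 0
  have hclass : ∀ q : (G.contract C).V, ∑ v with mk v = q, G.bd g v = 0 := by
    intro q
    refine Eq.trans ?_ (congrFun hp' q)
    simp_rw [bd_apply]
    rw [Finset.sum_comm]
    have hg : ∀ e ∈ (Finset.univ : Finset G.E), e ∉ Finset.univ.filter (fun e => e ∉ C) →
        ∑ v with mk v = q, g e * G.inc e v = 0 := by
      intro e _ he
      have : e ∈ C := by simpa using he
      simp [g, this]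
    rw [← Finset.sum_subset (Finset.subset_univ _) hg]
    refine (Finset.sum_bij (fun e _ => e.1) ?_ ?_ ?_ ?_).symm
    · intro e _
      simpa using e.2
    · intro e _ e' _ h
      exact Subtype.ext h
    · intro e he
      exact ⟨⟨e, by simpa using he⟩, Finset.mem_univ _, rfl⟩
    · intro e _
      obtain ⟨a, b, hab⟩ : ∃ a b, G.ends e.1 = s(a, b) := by
        induction h : G.ends e.1 with | _ a b => exact ⟨a, b, rfl⟩
      have hab' : (G.contract C).ends e = s(mk a, mk b) := by
        change (G.ends e.1).map _ = _
        rw [hab]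
        rfl
      have h1 : g e.1 = p' e := dif_pos e.2
      rw [← Finset.mul_sum, h1, inc_eq hab']
      congr 1
      simp_rw [inc_eq hab, Finset.sum_add_distrib, pt_apply, Finset.sum_ite_eq']
      simp [eq_comm]
  have hrep : ∀ v, ∃ K : G.E → ZMod 2, (∀ e ∉ C, K e = 0) ∧
      G.bd K = G.pt v + G.pt (Quot.out (mk v)) := fun v =>
    exists_join (reaches_of_quot_eq (Quot.out_eq (mk v)).symm)
  choose K hK hbd using hrep
  refine ⟨g + ∑ v, G.bd g v • K v, ?_, ?_⟩
  · rw [map_add, map_sum]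
    simp_rw [map_smul, hbd]
    funext u
    simp only [Pi.add_apply, Finset.sum_apply, Pi.smul_apply, smul_eq_mul, mul_add,
      Finset.sum_add_distrib, Pi.zero_apply, pt_apply, mul_ite, mul_one, mul_zero,
      Finset.sum_ite_eq, Finset.mem_univ, if_true]
    rw [← add_assoc, CharTwo.add_self_eq_zero, zero_add, ← Finset.sum_filter]
    by_cases hu : u = Quot.out (mk u)
    · refine Eq.trans ?_ (hclass (mk u))
      refine Finset.sum_congr (Finset.filter_congr fun v _ => ?_) fun _ _ => rfl
      constructor
      · intro h
        rw [h]
        exact (Quot.out_eq (mk v)).symm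
      · intro h
        rw [h]
        exact hu
    · rw [Finset.sum_eq_zero]
      intro v hv
      exfalso
      have h := (Finset.mem_filter.1 hv).2
      have h2 : mk u = mk v := by rw [h]; exact Quot.out_eq (mk v)
      exact hu (by rw [h2]; exact h)
  · intro e he
    simp [g, he, hK _ e he]

/-- At each vertex, either boundaries of chains on a circuit vanish and it has at most one edge there, or it
has exactly two edges there, which determine the boundary. -/
theorem IsCircuit.local_structure {C : Set G.E} (hC : G.IsCircuit C) (v : G.V) :
    ((∀ p : G.E → ZMod 2, (∀ e ∉ C, p e = 0) → G.bd p v = 0) ∧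
      ∀ e ∈ C, ∀ e' ∈ C, v ∈ G.ends e → v ∈ G.ends e' → e = e') ∨
    ∃ a ∈ C, ∃ b ∈ C, a ≠ b ∧ v ∈ G.ends a ∧ v ∈ G.ends b ∧
      (∀ p : G.E → ZMod 2, (∀ e ∉ C, p e = 0) → G.bd p v = p a + p b) ∧
      ∀ e ∈ C, v ∈ G.ends e → e = a ∨ e = b := by
  classical
  have hinc0 : ∀ p : G.E → ZMod 2, (∀ e ∉ C, p e = 0) →
      ∀ e, ¬ (e ∈ C ∧ v ∈ G.ends e ∧ ¬ (G.ends e).IsDiag) → p e * G.inc e v = 0 := by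
    intro p hp e he
    by_cases heC : e ∈ C
    · have : ¬ (v ∈ G.ends e ∧ ¬ (G.ends e).IsDiag) := fun h => he ⟨heC, h⟩
      simp [inc, this]
    · simp [hp e heC]
  have hdiag : ∀ e, v ∈ G.ends e → (G.ends e).IsDiag → G.ends e = s(v, v) := by
    intro e
    induction G.ends e with | _ a b =>
    intro h1 h2
    rw [Sym2.mk_isDiag_iff] at h2
    subst h2
    rw [Sym2.mem_iff, or_self] at h1
    rw [h1]
  by_cases hv : ∃ e ∈ C, v ∈ G.ends e
  swap
  · left
    refine ⟨fun p hp => Finset.sum_eq_zero fun e _ => hinc0 p hp e fun h => hv ⟨e, h.1, h.2.1⟩, ?_⟩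
    intro e he e' _ hve
    exact (hv ⟨e, he, hve⟩).elim
  have hdeg := hC.2.1 v hv
  rw [degIn] at hdeg
  rcases Nat.eq_zero_or_pos (Nat.card {e : G.E // e ∈ C ∧ G.ends e = s(v, v)}) with h0 | h0
  · have h2 : Nat.card {e : G.E // e ∈ C ∧ v ∈ G.ends e ∧ ¬ (G.ends e).IsDiag} = 2 := by omega
    rw [Finite.card_eq_zero_iff] at h0
    have hnd : ∀ e ∈ C, v ∈ G.ends e → ¬ (G.ends e).IsDiag := fun e he hve hd =>
      h0.false ⟨e, he, hdiag e hve hd⟩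
    obtain ⟨⟨a, ha⟩, ⟨b, hb⟩, hab, huniv⟩ := Nat.card_eq_two_iff.1 h2
    have hall : ∀ e ∈ C, v ∈ G.ends e → e = a ∨ e = b := by
      intro e he hve
      have : (⟨e, he, hve, hnd e he hve⟩ :
        {e : G.E // e ∈ C ∧ v ∈ G.ends e ∧ ¬ (G.ends e).IsDiag}) ∈ ({⟨a, ha⟩, ⟨b, hb⟩} : Set _) :=
          huniv ▸ Set.mem_univ _
      simpa using this
    have hab' : a ≠ b := fun h => hab (Subtype.ext h)
    refine .inr ⟨a, ha.1, b, hb.1, hab', ha.2.1, hb.2.1, fun p hp => ?_, hall⟩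
    rw [bd_apply, ← Finset.sum_subset (Finset.subset_univ {a, b}), Finset.sum_pair hab']
    · simp [inc, ha.2, hb.2]
    · intro e _ he
      refine hinc0 p hp e fun h => he ?_
      simpa using hall e h.1 h.2.1
  · have h2 : Nat.card {e : G.E // e ∈ C ∧ v ∈ G.ends e ∧ ¬ (G.ends e).IsDiag} = 0 := by omega
    have h1 : Nat.card {e : G.E // e ∈ C ∧ G.ends e = s(v, v)} = 1 := by omega
    rw [Finite.card_eq_zero_iff] at h2
    have hs := (Nat.card_eq_one_iff_unique.1 h1).1
    have hd : ∀ e ∈ C, v ∈ G.ends e → G.ends e = s(v, v) := fun e he hve =>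
      hdiag e hve (by_contra fun h => h2.false ⟨e, he, hve, h⟩)
    refine .inl ⟨fun p hp => Finset.sum_eq_zero fun e _ =>
      hinc0 p hp e fun h => h2.false ⟨e, h⟩, ?_⟩
    intro e he e' he' hve hve'
    exact congrArg Subtype.val (hs.elim ⟨e, he, hd e he hve⟩ ⟨e', he', hd e' he' hve'⟩)

theorem IsCircuit.bd_mul {C : Set G.E} (hC : G.IsCircuit C) {p q : G.E → ZMod 2}
    (hp : ∀ e ∉ C, p e = 0) (hq : ∀ e ∉ C, q e = 0) {v : G.V}
    (hpv : G.bd p v = 0) (hqv : G.bd q v = 0) : G.bd (p * q) v = 0 := by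
  have hpq : ∀ e ∉ C, (p * q) e = 0 := fun e he => by simp [hp e he]
  rcases hC.local_structure v with ⟨h, _⟩ | ⟨a, _, b, _, _, _, _, h, _⟩
  · exact h _ hpq
  · rw [h _ hpq]
    rw [h _ hp] at hpv
    rw [h _ hq] at hqv
    rw [Pi.mul_apply, Pi.mul_apply]
    generalize p a = w at *
    generalize p b = x at *
    generalize q a = y at *
    generalize q b = z at *
    revert w x y z
    decide

/-- The chain of an edge set. -/
noncomputable def chain (C : Set G.E) : G.E → ZMod 2 := C.indicator 1

theorem chain_of_mem {C : Set G.E} {e : G.E} (he : e ∈ C) : chain C e = 1 := by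
  simp [chain, he]

theorem chain_of_notMem {C : Set G.E} {e : G.E} (he : e ∉ C) : chain C e = 0 := by
  simp [chain, he]

theorem IsCircuit.bd_chain {C : Set G.E} (hC : G.IsCircuit C) : G.bd (chain C) = 0 := by
  funext v
  rcases hC.local_structure v with ⟨h, _⟩ | ⟨a, ha, b, hb, _, _, _, h, _⟩
  · exact h _ fun e => chain_of_notMem
  · rw [h _ fun e => chain_of_notMem, chain_of_mem ha, chain_of_mem hb]
    rfl

theorem IsCircuit.eq_zero_or_eq_chain {C : Set G.E} (hC : G.IsCircuit C) {p : G.E → ZMod 2}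
    (hp : ∀ e ∉ C, p e = 0) (hbd : G.bd p = 0) : p = 0 ∨ p = chain C := by
  have hloc : ∀ v, ∀ e ∈ C, ∀ e' ∈ C, v ∈ G.ends e → v ∈ G.ends e' → p e = p e' := by
    intro v e he e' he' hv hv'
    rcases hC.local_structure v with ⟨_, h⟩ | ⟨a, _, b, _, _, _, _, h, hall⟩
    · rw [h e he e' he' hv hv']
    · have hab : p a = p b := by
        rw [← CharTwo.add_eq_zero, ← h p hp, hbd]
        rfl
      rcases hall e he hv with rfl | rfl <;> rcases hall e' he' hv' with rfl | rfl <;>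
        simp [hab]
  obtain ⟨e₀, he₀⟩ := hC.1
  have hmem : ∀ e, ∃ v, v ∈ G.ends e := fun e => ⟨_, Sym2.out_fst_mem _⟩
  have hconst : ∀ e ∈ C, p e = p e₀ := by
    intro e he
    obtain ⟨u, hu⟩ := hmem e₀
    obtain ⟨w, hw⟩ := hmem e
    have hreach := hC.2.2 u w ⟨e₀, he₀, hu⟩ ⟨e, he, hw⟩
    clear hbd
    induction hreach generalizing e with
    | refl => exact hloc u e he e₀ he₀ hw hu
    | @tail b c _ hbc ih =>
      obtain ⟨e', he', hends⟩ := hbc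
      rw [hloc c e he e' he' hw (by simp [hends]), ih e' he' (by simp [hends])]
  rcases zmod_two_cases (p e₀) with h | h
  · left
    funext e
    by_cases he : e ∈ C
    · rw [hconst e he, h]; rfl
    · exact hp e he
  · right
    funext e
    by_cases he : e ∈ C
    · rw [hconst e he, h, chain_of_mem he]
    · rw [hp e he, chain_of_notMem he]

/-- A pair of `ℤ₂`-flows, not simultaneously zero on any edge outside `C`. -/
def IsFlowPair (C : Set G.E) (x y : G.E → ZMod 2) : Prop :=
  G.bd x = 0 ∧ G.bd y = 0 ∧ ∀ e ∉ C, ¬ (x e = 0 ∧ y e = 0)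

/-- The nontrivial character `ℤ₂ → {1, -1}`. -/
def sgn (a : ZMod 2) : ℤ := if a = 0 then 1 else -1

/-- The total sign of `x` over the support of the chain `A`. -/
noncomputable def wt (x A : G.E → ZMod 2) : ℤ := ∑ e, if A e = 0 then 0 else sgn (x e)

theorem wt_zero (x : G.E → ZMod 2) : wt x 0 = 0 := by
  simp [wt]

theorem wt_add (x A B : G.E → ZMod 2) : wt x (A + B) = wt x A + wt x B - 2 * wt x (A * B) := by
  simp only [wt, Finset.mul_sum, ← Finset.sum_add_distrib, ← Finset.sum_sub_distrib]
  refine Finset.sum_congr rfl fun e _ => ?_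
  simp only [Pi.add_apply, Pi.mul_apply]
  rcases zmod_two_cases (A e) with h1 | h1 <;> rcases zmod_two_cases (B e) with h2 | h2 <;>
    simp [h1, h2, CharTwo.add_self_eq_zero, two_mul]

theorem wt_add_left (x P A : G.E → ZMod 2) : wt (x + P) A = wt x A - 2 * wt x (A * P) := by
  simp only [wt, Finset.mul_sum, ← Finset.sum_sub_distrib]
  refine Finset.sum_congr rfl fun e _ => ?_
  simp only [Pi.add_apply, Pi.mul_apply]
  rcases zmod_two_cases (A e) with h1 | h1 <;> rcases zmod_two_cases (P e) with h2 | h2 <;>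
    rcases zmod_two_cases (x e) with h3 | h3 <;>
    simp [h1, h2, h3, sgn, CharTwo.add_self_eq_zero]

open scoped Classical in
theorem wt_single (x : G.E → ZMod 2) (e : G.E) : wt x (Pi.single e 1) = sgn (x e) := by
  rw [wt, Finset.sum_eq_single e]
  · simp
  · intro e' _ he'
    simp [he']
  · simp

open scoped Classical in
theorem wt_add_single (x B : G.E → ZMod 2) (e : G.E) :
    wt x (B + Pi.single e 1) = wt x B + if B e = 0 then sgn (x e) else -sgn (x e) := by
  rw [wt_add, wt_single]
  rcases zmod_two_cases (B e) with h | h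
  · have : B * Pi.single e 1 = 0 := by
      funext e'
      by_cases he : e' = e
      · subst he; simp [h]
      · simp [he]
    rw [this, wt_zero, if_pos h]
    ring
  · have : B * Pi.single e 1 = Pi.single e 1 := by
      funext e'
      by_cases he : e' = e
      · subst he; simp [h]
      · simp [he]
    rw [this, wt_single, if_neg (by simp [h])]
    ring

/-- Outside `C`, some two-coloured trail joins a vertex at which the first coordinate changes
along `C` to another vertex of `C`. -/
theorem exists_kempe_chain {C : Set G.E} {x y : G.E → ZMod 2} (h : G.IsFlowPair C x y) (j : G.V)
    (hj : G.bd (chain C * x) j = 1) :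
    ∃ (d : ZMod 2) (K : G.E → ZMod 2) (j' : G.V), j' ≠ j ∧ (∃ e ∈ C, j' ∈ G.ends e) ∧
      G.bd K = G.pt j + G.pt j' ∧ ∀ e, K e ≠ 0 → e ∉ C ∧ ¬ (x e = 1 ∧ y e = d) := by
  classical
  set d : ZMod 2 := G.bd (chain C * y) j + 1 with hd
  set p : G.E → ZMod 2 := d • x + y + (d • (chain C * x) + chain C * y) with hp
  have hbd : G.bd p = d • G.bd (chain C * x) + G.bd (chain C * y) := by
    rw [hp, map_add, map_add, map_add, map_smul, map_smul, h.1, h.2.1]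
    simp
  have hpj : G.bd p j = 1 := by
    rw [hbd, Pi.add_apply, Pi.smul_apply, hj, hd]
    generalize G.bd (chain C * y) j = t
    revert t
    decide
  have hsupp : ∀ e, p e ≠ 0 → e ∉ C ∧ ¬ (x e = 1 ∧ y e = d) := by
    intro e he
    have heC : e ∉ C := by
      intro heC
      apply he
      simp only [hp, Pi.add_apply, Pi.smul_apply, Pi.mul_apply, chain_of_mem heC, one_mul]
      exact CharTwo.add_self_eq_zero _
    refine ⟨heC, fun hxy => he ?_⟩
    simp [hp, chain_of_notMem heC, hxy.1, hxy.2, CharTwo.add_self_eq_zero]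
  have hsum := sum_bd_eq_zero p (Finset.univ.filter fun v => G.Reaches {e | p e ≠ 0} j v) (by
    intro e a b hpe hab
    simp only [Finset.mem_filter, Finset.mem_univ, true_and]
    exact ⟨fun hr => hr.tail ⟨e, hpe, hab⟩, fun hr => hr.tail ⟨e, hpe, hab.trans Sym2.eq_swap⟩⟩)
  obtain ⟨j', hj', hr, hne⟩ : ∃ j', j' ≠ j ∧ G.Reaches {e | p e ≠ 0} j j' ∧ G.bd p j' ≠ 0 := by
    by_contra! hcon
    rw [Finset.sum_eq_single j, hpj] at hsum
    · exact one_ne_zero hsum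
    · intro v hv hvj
      exact hcon v hvj (Finset.mem_filter.1 hv).2
    · intro hnot
      exact (hnot (Finset.mem_filter.2 ⟨Finset.mem_univ _, .refl⟩)).elim
  obtain ⟨K, hK, hbK⟩ := exists_join hr
  refine ⟨d, K, j', hj', ?_, hbK, fun e he => hsupp e fun h0 => he (hK e fun h1 => h1 h0)⟩
  by_contra hcon
  apply hne
  have hzero : ∀ z : G.E → ZMod 2, G.bd (chain C * z) j' = 0 := by
    intro z
    rw [bd_apply]
    refine Finset.sum_eq_zero fun e _ => ?_
    by_cases heC : e ∈ C
    · have : j' ∉ G.ends e := fun h => hcon ⟨e, heC, h⟩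
      simp [inc, this]
    · simp [chain_of_notMem heC]
  rw [hbd]
  simp [hzero]

/-- A chain with zero total supported on three vertices is spanned by two differences. -/
theorem eq_of_support {g : G.V → ZMod 2} {i j k : G.V} (hij : i ≠ j) (hkj : k ≠ j)
    (hg : ∀ v, v ≠ i → v ≠ j → v ≠ k → g v = 0) (hsum : ∑ v, g v = 0) :
    ∃ α γ : ZMod 2, g = α • (G.pt i + G.pt j) + γ • (G.pt j + G.pt k) := by
  classical
  refine ⟨g i, if i = k then 0 else g k, ?_⟩
  set γ := if i = k then 0 else g k with hγ
  set r := g i • (G.pt i + G.pt j) + γ • (G.pt j + G.pt k) with hr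
  have hpt : ∀ v, ∑ w, G.pt v w = 1 := fun v => by simp [pt]
  have hrsum : ∑ v, r v = 0 := by
    simp only [hr, Pi.add_apply, Pi.smul_apply, smul_eq_mul, Finset.sum_add_distrib,
      ← Finset.mul_sum, hpt]
    generalize g i = s
    generalize γ = t
    revert s t
    decide
  have hoff : ∀ v, v ≠ j → g v = r v := by
    intro v hv
    simp only [hr, hγ, Pi.add_apply, Pi.smul_apply, smul_eq_mul, pt_apply, if_neg hv]
    by_cases h1 : v = i
    · subst h1
      by_cases h2 : v = k <;> simp [h2]
    · by_cases h2 : v = k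
      · subst h2
        simp [h1, Ne.symm h1]
      · simp [h1, h2, hg v h1 hv h2]
  funext v
  by_cases hv : v = j
  · subst hv
    have h := hsum.trans hrsum.symm
    rw [← Finset.add_sum_erase _ _ (Finset.mem_univ v),
      ← Finset.add_sum_erase _ r (Finset.mem_univ v),
      Finset.sum_congr rfl fun w hw => hoff w (Finset.ne_of_mem_erase hw)] at h
    exact add_right_cancel h
  · exact hoff v hv

/-- A subpath of the circuit, or one of the degenerate chains `0` and `chain C`. -/
def IsArc (C : Set G.E) (A : G.E → ZMod 2) : Prop :=
  (∀ e ∉ C, A e = 0) ∧ ∃ i j, G.bd A = G.pt i + G.pt j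

theorem IsCircuit.not_arcs_cross {C : Set G.E} (hC : G.IsCircuit C) {x A P : G.E → ZMod 2}
    {i j k : G.V} (hij : i ≠ j) (hkj : k ≠ j)
    (hA : ∀ e ∉ C, A e = 0) (hP : ∀ e ∉ C, P e = 0)
    (hbA : G.bd A = G.pt i + G.pt j) (hbP : G.bd P = G.pt j + G.pt k)
    (hbal : wt x (chain C) = 0)
    (hwt : ∀ P : G.E → ZMod 2, (∀ e ∉ C, P e = 0) → G.bd P = G.pt j + G.pt k →
      wt x P = 0 ∧ 1 ≤ wt x (A * P)) : False := by
  have hne : ∀ B : G.E → ZMod 2, (∀ e ∉ C, B e = 0) → wt x B ≠ 0 → G.bd B ≠ 0 := by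
    intro B hB hw hb
    rcases hC.eq_zero_or_eq_chain hB hb with rfl | rfl
    · exact hw (wt_zero x)
    · exact hw hbal
  have hAP : ∀ Q : G.E → ZMod 2, ∀ e ∉ C, (A * Q) e = 0 := fun Q e he => by simp [hA e he]
  have hcomp : ∀ Q : G.E → ZMod 2, (∀ e ∉ C, Q e = 0) → G.bd Q = G.pt j + G.pt k →
      G.bd (A * Q) ≠ 0 ∧ G.bd (A * Q) ≠ G.pt j + G.pt k := by
    intro Q hQ hbQ
    obtain ⟨h0, h1⟩ := hwt Q hQ hbQ
    refine ⟨hne _ (hAP Q) (by omega), fun h => ?_⟩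
    refine hne (Q + A * Q) (fun e he => by simp [hQ e he]) ?_ ?_
    · have : Q * (A * Q) = A * Q := by
        funext e
        simp only [Pi.mul_apply]
        generalize A e = s
        generalize Q e = t
        revert s t
        decide
      rw [wt_add, this]
      omega
    · rw [map_add, h, hbQ, chain_add_self]
  set P' := chain C + P with hP'
  have hP'C : ∀ e ∉ C, P' e = 0 := fun e he => by simp [hP', hP e he, chain_of_notMem he]
  have hbP' : G.bd P' = G.pt j + G.pt k := by rw [hP', map_add, hC.bd_chain, zero_add, hbP]
  have hAP' : A * P' = A + A * P := by
    funext e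
    by_cases he : e ∈ C
    · simp [hP', chain_of_mem he, mul_add]
    · simp [hA e he]
  obtain ⟨h1, h2⟩ := hcomp P hP hbP
  obtain ⟨h3, h4⟩ := hcomp P' hP'C hbP'
  rw [hAP', map_add, hbA] at h3 h4
  have hsum := sum_bd_eq_zero (A * P) Finset.univ (by simp)
  have hsupp : ∀ v, v ≠ i → v ≠ j → v ≠ k → G.bd (A * P) v = 0 := by
    classical
    intro v hi hj hk
    refine hC.bd_mul hA hP ?_ ?_
    · rw [hbA]
      simp [pt_apply, hi, hj]
    · rw [hbP]
      simp [pt_apply, hj, hk]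
  obtain ⟨α, γ, hg⟩ := eq_of_support hij hkj hsupp hsum
  rcases zmod_two_cases α with rfl | rfl <;> rcases zmod_two_cases γ with rfl | rfl
  · exact h1 (by rw [hg]; simp)
  · exact h2 (by rw [hg]; simp)
  · exact h3 (by rw [hg, one_smul, zero_smul, add_zero, chain_add_self])
  · exact h4 (by rw [hg, one_smul, one_smul, ← add_assoc, chain_add_self, zero_add])

/-- Some flow pair has unbalanced first coordinate on the circuit. -/
theorem IsCircuit.exists_unbalanced {C : Set G.E} (hC : G.IsCircuit C) {x₀ y₀ : G.E → ZMod 2}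
    (h₀ : G.IsFlowPair C x₀ y₀) : ∃ x y, G.IsFlowPair C x y ∧ wt x (chain C) ≠ 0 := by
  classical
  by_contra! hbal
  obtain ⟨e₀, he₀⟩ := hC.1
  obtain ⟨⟨x, y, A⟩, ⟨hxy, hA, i, j, hbA⟩, hmax⟩ := Set.exists_max_image
    {t : (G.E → ZMod 2) × (G.E → ZMod 2) × (G.E → ZMod 2) |
      G.IsFlowPair C t.1 t.2.1 ∧ G.IsArc C t.2.2}
    (fun t => wt t.1 t.2.2) (Set.toFinite _)
    ⟨(x₀, y₀, 0), h₀, fun _ _ => rfl, (G.ends e₀).out.1, (G.ends e₀).out.1,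
      by rw [map_zero, chain_add_self]⟩
  dsimp only at hxy hA hbA
  replace hmax : ∀ x' y' A', G.IsFlowPair C x' y' → G.IsArc C A' → wt x' A' ≤ wt x A :=
    fun x' y' A' h1 h2 => hmax (x', y', A') ⟨h1, h2⟩
  have hpos : 1 ≤ wt x A := by
    obtain ⟨e, he, hxe⟩ : ∃ e ∈ C, x e = 0 := by
      by_contra! hcon
      have h := hbal x y hxy
      have hneg : wt x (chain C) < 0 := by
        rw [wt]
        refine Finset.sum_neg' (fun e _ => ?_) ⟨e₀, Finset.mem_univ _, ?_⟩
        · by_cases he : e ∈ C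
          · simp [chain_of_mem he, sgn, hcon e he]
          · simp [chain_of_notMem he]
        · simp [chain_of_mem he₀, sgn, hcon e₀ he₀]
      omega
    have hends : G.ends e = s((G.ends e).out.1, (G.ends e).out.2) := (Quot.out_eq _).symm
    have h := hmax x y (Pi.single e 1) hxy
      ⟨fun e' he' => by
        have : e' ≠ e := fun h => he' (h ▸ he)
        simp [this], _, _, bd_single hends⟩
    rwa [wt_single, hxe] at h
  have hij : i ≠ j := by
    rintro rfl
    rw [chain_add_self] at hbA
    rcases hC.eq_zero_or_eq_chain hA hbA with rfl | rfl
    · rw [wt_zero] at hpos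
      omega
    · rw [hbal x y hxy] at hpos
      omega
  have hAj : G.bd A j = 1 := by
    rw [hbA]
    simp [pt_apply, hij.symm]
  obtain ⟨a, ha, b, hb, -, hja, hjb, hloc, -⟩ := (hC.local_structure j).resolve_left fun h => by
    rw [h.1 A hA] at hAj
    exact zero_ne_one hAj
  have htoggle : ∀ e ∈ C, j ∈ G.ends e → G.IsArc C (A + Pi.single e 1) := by
    rintro e he ⟨j₂, hends⟩
    refine ⟨fun e' he' => ?_, i, j₂, ?_⟩
    · have : e' ≠ e := fun h => he' (h ▸ he)
      simp [hA e' he', this]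
    · rw [map_add, hbA, bd_single hends]
      calc G.pt i + G.pt j + (G.pt j + G.pt j₂)
          = G.pt i + (G.pt j + G.pt j) + G.pt j₂ := by abel
        _ = G.pt i + G.pt j₂ := by rw [chain_add_self, add_zero]
  have hstep : ∀ e ∈ C, j ∈ G.ends e → x e = 1 + A e ∧
      (if A e = 0 then sgn (x e) else -sgn (x e)) = -1 := by
    intro e he hje
    have h := hmax x y _ hxy (htoggle e he hje)
    rw [wt_add_single] at h
    replace h : (if A e = 0 then sgn (x e) else -sgn (x e)) ≤ 0 := by omega
    generalize A e = s at *
    generalize x e = t at *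
    revert s t
    decide
  have hchange : G.bd (chain C * x) j = 1 := by
    rw [hloc _ fun e he => by simp [chain_of_notMem he], Pi.mul_apply, Pi.mul_apply,
      chain_of_mem ha, chain_of_mem hb, (hstep a ha hja).1, (hstep b hb hjb).1, ← hAj,
      hloc A hA]
    generalize A a = s
    generalize A b = t
    revert s t
    decide
  obtain ⟨d, K, k, hkj, ⟨f, hf, hkf⟩, hbK, hK⟩ := exists_kempe_chain hxy j hchange
  obtain ⟨P₀, hP₀, hbP₀⟩ := exists_join (hC.2.2 j k ⟨a, ha, hja⟩ ⟨f, hf, hkf⟩)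
  refine hC.not_arcs_cross hij hkj hA hP₀ hbA hbP₀ (hbal x y hxy) fun P hP hbP => ?_
  have hKC : ∀ e ∈ C, K e = 0 := fun e he => by_contra fun h => (hK e h).1 he
  have hflow : G.IsFlowPair C (x + (K + P)) (y + d • (K + P)) := by
    have hKP : G.bd (K + P) = 0 := by rw [map_add, hbK, hbP, chain_add_self]
    refine ⟨by rw [map_add, hxy.1, hKP, add_zero],
      by rw [map_add, map_smul, hxy.2.1, hKP, smul_zero, add_zero], fun e he h => ?_⟩
    have h1 := hxy.2.2 e he
    have h2 := hK e
    simp only [Pi.add_apply, Pi.smul_apply, smul_eq_mul, hP e he, add_zero] at h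
    rcases zmod_two_cases (K e) with h0 | h0
    · rw [h0] at h
      simp only [add_zero, mul_zero] at h
      exact h1 h
    · rw [h0] at h
      rw [mul_one, CharTwo.add_eq_zero, CharTwo.add_eq_zero] at h
      exact (h2 (by simp [h0])).2 h
  have hswitch : ∀ B : G.E → ZMod 2, (∀ e ∉ C, B e = 0) →
      wt (x + (K + P)) B = wt x B - 2 * wt x (B * P) := by
    intro B hB
    have : B * (K + P) = B * P := by
      funext e
      by_cases he : e ∈ C
      · simp [hKC e he]
      · simp [hB e he]
    rw [wt_add_left, this]
  constructor
  · have h := hswitch (chain C) fun e => chain_of_notMem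
    have hCP : chain C * P = P := by
      funext e
      by_cases he : e ∈ C
      · simp [chain_of_mem he]
      · simp [hP e he]
    rw [hbal _ _ hflow, hbal x y hxy, hCP] at h
    omega
  · obtain ⟨e, he, hje, hPe⟩ : ∃ e ∈ C, j ∈ G.ends e ∧ P e = 1 := by
      have hPj : P a + P b = 1 := by
        rw [← hloc P hP, hbP]
        simp [pt_apply, hkj.symm]
      rcases zmod_two_cases (P a) with h | h
      · exact ⟨b, hb, hjb, by simpa [h] using hPj⟩
      · exact ⟨a, ha, hja, h⟩
    have harc := htoggle e he hje
    have h := hmax _ _ _ hflow harc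
    have hmul : (A + Pi.single e 1) * P = A * P + Pi.single e 1 := by
      funext e'
      by_cases he' : e' = e
      · subst he'
        simp [hPe]
      · simp [he']
    have hAPe : (A * P) e = A e := by simp [hPe]
    rw [hswitch _ harc.1, hmul, wt_add_single, wt_add_single, hAPe, (hstep e he hje).2] at h
    omega

/-- The number of edges of `C` on which both coordinates vanish. -/
noncomputable def zeros (C : Set G.E) (x y : G.E → ZMod 2) : ℕ :=
  {e ∈ C | x e = 0 ∧ y e = 0}.ncard

theorem zeros_eq_sum (C : Set G.E) (x y : G.E → ZMod 2) :
    (zeros C x y : ℤ) = ∑ e, if chain C e = 1 ∧ x e = 0 ∧ y e = 0 then 1 else 0 := by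
  classical
  rw [zeros, Set.ncard_eq_toFinset_card', Finset.sum_boole]
  congr 2
  ext e
  by_cases he : e ∈ C
  · simp [chain_of_mem he, he]
  · simp [chain_of_notMem he, he]

theorem ncard_eq_sum (C : Set G.E) :
    (C.ncard : ℤ) = ∑ e, if chain C e = 1 then 1 else 0 := by
  classical
  rw [Set.ncard_eq_toFinset_card', Finset.sum_boole]
  congr 2
  ext e
  by_cases he : e ∈ C
  · simp [chain_of_mem he, he]
  · simp [chain_of_notMem he, he]

theorem sum_zeros (C : Set G.E) (x y : G.E → ZMod 2) :
    (zeros C x y + zeros C x (y + chain C) + zeros C (x + chain C) y +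
      zeros C (x + chain C) (y + chain C) : ℤ) = C.ncard := by
  simp only [zeros_eq_sum, ncard_eq_sum, ← Finset.sum_add_distrib]
  refine Finset.sum_congr rfl fun e _ => ?_
  simp only [Pi.add_apply]
  rcases zmod_two_cases (x e) with h1 | h1 <;> rcases zmod_two_cases (y e) with h2 | h2 <;>
    rcases zmod_two_cases (chain C e) with h3 | h3 <;>
    simp [h1, h2, h3, CharTwo.add_self_eq_zero]

theorem wt_chain_eq_zeros (C : Set G.E) (x y : G.E → ZMod 2) :
    wt x (chain C) = zeros C x y + zeros C x (y + chain C) - zeros C (x + chain C) y -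
      zeros C (x + chain C) (y + chain C) := by
  simp only [wt, zeros_eq_sum, ← Finset.sum_add_distrib, ← Finset.sum_sub_distrib]
  refine Finset.sum_congr rfl fun e _ => ?_
  simp only [Pi.add_apply]
  rcases zmod_two_cases (x e) with h1 | h1 <;> rcases zmod_two_cases (y e) with h2 | h2 <;>
    rcases zmod_two_cases (chain C e) with h3 | h3 <;>
    simp [h1, h2, h3, sgn, CharTwo.add_self_eq_zero]

theorem IsCircuit.exists_four_mul_zeros_lt {C : Set G.E} (hC : G.IsCircuit C)
    {x₀ y₀ : G.E → ZMod 2} (h₀ : G.IsFlowPair C x₀ y₀) :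
    ∃ x y, G.IsFlowPair C x y ∧ 4 * zeros C x y < C.ncard := by
  obtain ⟨x, y, h, hwt⟩ := hC.exists_unbalanced h₀
  by_contra! hcon
  have hx : G.bd (x + chain C) = 0 := by rw [map_add, h.1, hC.bd_chain, add_zero]
  have hy : G.bd (y + chain C) = 0 := by rw [map_add, h.2.1, hC.bd_chain, add_zero]
  have h1 := hcon _ _ h
  have h2 := hcon x (y + chain C)
    ⟨h.1, hy, fun e he => by simpa [chain_of_notMem he] using h.2.2 e he⟩
  have h3 := hcon (x + chain C) y
    ⟨hx, h.2.1, fun e he => by simpa [chain_of_notMem he] using h.2.2 e he⟩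
  have h4 := hcon (x + chain C) (y + chain C)
    ⟨hx, hy, fun e he => by simpa [chain_of_notMem he] using h.2.2 e he⟩
  have h5 := sum_zeros C x y
  rw [wt_chain_eq_zeros C x y] at hwt
  omega

end Multigraph

open Multigraph in
/-- If `C` is a circuit of `G` and the contracted graph `G/C`
admits a nowhere-zero `ℤ₂×ℤ₂`-flow, then `G` admits a `ℤ₂×ℤ₂`-flow `f` with
`E(G) − E(C) ⊆ supp f` and `|E_{f=(0,0)}(C)| < |E(C)|/4`. -/
theorem circuit_contract_flow (G : Multigraph) (C : Set G.E)
    (hC : G.IsCircuit C)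
    (hnz : ∃ f' : (G.contract C).E → ZMod 2 × ZMod 2,
      (G.contract C).IsFlow f' ∧ ∀ e, f' e ≠ (0, 0)) :
    ∃ f : G.E → ZMod 2 × ZMod 2, G.IsFlow f ∧
      (∀ e : G.E, e ∉ C → f e ≠ (0, 0)) ∧
      ({e ∈ C | f e = (0, 0)}.ncard : ℝ) < (1 / 4) * (C.ncard : ℝ) := by
  obtain ⟨f', hf', hne⟩ := hnz
  obtain ⟨h1, h2⟩ := (isFlow_iff f').1 hf'
  obtain ⟨x₀, hx₀, hx₀'⟩ := exists_lift_contract C _ h1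
  obtain ⟨y₀, hy₀, hy₀'⟩ := exists_lift_contract C _ h2
  obtain ⟨x, y, hxy, hlt⟩ := hC.exists_four_mul_zeros_lt (x₀ := x₀) (y₀ := y₀)
    ⟨hx₀, hy₀, fun e he h => hne ⟨e, he⟩
      (Prod.ext ((hx₀' e he).symm.trans h.1) ((hy₀' e he).symm.trans h.2))⟩
  refine ⟨fun e => (x e, y e), (isFlow_iff _).2 ⟨hxy.1, hxy.2.1⟩,
    fun e he h => hxy.2.2 e he (Prod.mk.inj h), ?_⟩
  have hset : {e ∈ C | (x e, y e) = ((0, 0) : ZMod 2 × ZMod 2)}.ncard = zeros C x y := by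
    simp only [Prod.mk.injEq, zeros]
  rw [hset]
  have h : (4 * zeros C x y : ℝ) < C.ncard := by exact_mod_cast hlt
  linarith
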